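/- arXiv:2204.01113 — 7 statements merged into one kernel-verified Lean document; each statement's English description precedes it below -/
import Mathlib

section
/- Normalization and unbiasedness of the Monte Carlo path estimator (core identities in the proof of Lemma 2.2): Let N ≥ 1, L ≥ 1. Let Φ : Fin N → ℂ satisfy ∑_x |Φ(x)|² = 1 and Φ(x) ≠ 0 for all x. For each l ∈ {1,…,L} let G_l be a real symmetric N×N matrix with nonnegative entries, let φ_l : Fin N → ℝ be entrywise strictly positive, and let λ_l > 0 satisfy G_l φ_l = λ_l φ_l. For a path x⃗ = (x_0,…,x_L) ∈ (Fin N)^{L+1} define Π(x⃗) = |Φ(x_0)|² ∏_{l=1}^L [G_l(x_{l−1},x_l) φ_l(x_l) / (λ_l φ_l(x_{l−1}))] and R(x⃗) = (Φ(x_L)/Φ(x_0)) ∏_{l=1}^L [λ_l φ_l(x_{l−1})/φ_l(x_l)]. Then (i) ∑_{x⃗} Π(x⃗) = 1, and (ii) ∑_{x⃗} Π(x⃗) R(x⃗) = ⟨Φ, G_1 G_2 ⋯ G_L Φ⟩, where the real matrices G_l act on ℂ^N by entrywise complexification. -/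
open scoped BigOperators ComplexConjugate
open Matrix

theorem path_sum_aux {R : Type*} [CommRing R] (N : ℕ) (g : Fin N → R) (L : ℕ) :
    ∀ (M : Fin L → Matrix (Fin N) (Fin N) R) (f : Fin N → R),
    ∑ xs : Fin (L + 1) → Fin N,
      f (xs 0) * (∏ l : Fin L, M l (xs l.castSucc) (xs l.succ)) * g (xs (Fin.last L))
    = f ⬝ᵥ ((List.ofFn M).prod *ᵥ g) := by
  induction L with
  | zero =>
    intro M f
    rw [← (Equiv.funUnique (Fin 1) (Fin N)).symm.sum_comp]
    simp [dotProduct]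
  | succ L ih =>
    intro M f
    rw [List.ofFn_succ, List.prod_cons, ← Matrix.mulVec_mulVec, Matrix.dotProduct_mulVec, ← ih,
      ← (Fin.consEquiv (fun _ => Fin N)).sum_comp, Fintype.sum_prod_type, Finset.sum_comm]
    refine Finset.sum_congr rfl fun ys _ => ?_
    simp only [Matrix.vecMul, dotProduct, Finset.sum_mul]
    refine Finset.sum_congr rfl fun y _ => ?_
    rw [Fin.prod_univ_succ]
    simp only [Fin.consEquiv_apply, Fin.cons_zero, Fin.cons_succ, Fin.castSucc_zero,
      ← Fin.succ_castSucc, ← Fin.succ_last]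
    ring

theorem stoch_prod_aux {N : ℕ} (l : List (Matrix (Fin N) (Fin N) ℝ))
    (h : ∀ M ∈ l, M *ᵥ (fun _ => (1 : ℝ)) = fun _ => 1) :
    l.prod *ᵥ (fun _ => (1 : ℝ)) = fun _ => 1 := by
  induction l with
  | nil => simp
  | cons a t ih =>
    rw [List.prod_cons, ← Matrix.mulVec_mulVec, ih (fun M hM => h M (by simp [hM])),
      h a (by simp)]

/-- Normalization and unbiasedness of the Monte Carlo path estimator
(core identities in the proof of Lemma 2.2). -/
theorem mc_path_estimator_normalized_and_unbiased
    (N L : ℕ) (hN : 1 ≤ N) (hL : 1 ≤ L)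
    (Φ : Fin N → ℂ)
    (hnorm : ∑ x, ‖Φ x‖ ^ 2 = 1)
    (hne : ∀ x, Φ x ≠ 0)
    (G : Fin L → Matrix (Fin N) (Fin N) ℝ)
    (hsymm : ∀ l, (G l).IsSymm)
    (hnonneg : ∀ l x y, 0 ≤ G l x y)
    (φ : Fin L → Fin N → ℝ)
    (hφ : ∀ l x, 0 < φ l x)
    (lam : Fin L → ℝ)
    (hlam : ∀ l, 0 < lam l)
    (heig : ∀ l, G l *ᵥ φ l = lam l • φ l) :
    (∑ xs : Fin (L + 1) → Fin N,
        ‖Φ (xs 0)‖ ^ 2 *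
          ∏ l : Fin L,
            G l (xs l.castSucc) (xs l.succ) * φ l (xs l.succ) /
              (lam l * φ l (xs l.castSucc)) = 1) ∧
    (∑ xs : Fin (L + 1) → Fin N,
        (↑(‖Φ (xs 0)‖ ^ 2 *
            ∏ l : Fin L,
              G l (xs l.castSucc) (xs l.succ) * φ l (xs l.succ) /
                (lam l * φ l (xs l.castSucc))) : ℂ) *
          (Φ (xs (Fin.last L)) / Φ (xs 0) *
            (↑(∏ l : Fin L, lam l * φ l (xs l.castSucc) / φ l (xs l.succ)) : ℂ))
      = ∑ x, (starRingEnd ℂ) (Φ x) *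
          (((List.ofFn fun l => (G l).map (Complex.ofReal))).prod *ᵥ Φ) x) := by
  constructor
  · have h := path_sum_aux N (fun _ => (1 : ℝ)) L
      (fun l => Matrix.of fun x y => G l x y * φ l y / (lam l * φ l x)) (fun x => ‖Φ x‖ ^ 2)
    rw [stoch_prod_aux] at h
    · simpa [dotProduct, hnorm] using h
    · intro M hM
      obtain ⟨l, rfl⟩ := (List.mem_ofFn' _ _).1 hM
      funext x
      have h1 := congrFun (heig l) x
      simp only [Matrix.mulVec, dotProduct, Pi.smul_apply, smul_eq_mul] at h1
      simp only [Matrix.mulVec, dotProduct, Matrix.of_apply, mul_one]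
      rw [← Finset.sum_div, h1]
      exact div_self (mul_pos (hlam l) (hφ l x)).ne'
  · have h := path_sum_aux N Φ L (fun l => (G l).map (Complex.ofReal))
      (fun x => (starRingEnd ℂ) (Φ x))
    refine Eq.trans (Finset.sum_congr rfl fun xs _ => ?_) h
    have e : (∏ l : Fin L, G l (xs l.castSucc) (xs l.succ) * φ l (xs l.succ) /
                (lam l * φ l (xs l.castSucc))) *
        (∏ l : Fin L, lam l * φ l (xs l.castSucc) / φ l (xs l.succ))
        = ∏ l : Fin L, G l (xs l.castSucc) (xs l.succ) := by
      rw [← Finset.prod_mul_distrib]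
      refine Finset.prod_congr rfl fun l _ => ?_
      have h1 := (hφ l (xs l.castSucc)).ne'
      have h2 := (hφ l (xs l.succ)).ne'
      have h3 := (hlam l).ne'
      field_simp
    have e2 : (∏ l : Fin L, ((G l).map Complex.ofReal) (xs l.castSucc) (xs l.succ))
        = ((∏ l : Fin L, G l (xs l.castSucc) (xs l.succ) : ℝ) : ℂ) := by
      rw [Complex.ofReal_prod]; rfl
    have e3 : ((‖Φ (xs 0)‖ ^ 2 : ℝ) : ℂ) = (starRingEnd ℂ) (Φ (xs 0)) * Φ (xs 0) := by
      rw [Complex.conj_mul']; push_cast; rfl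
    rw [e2, ← e, Complex.ofReal_mul, Complex.ofReal_mul, e3]
    have h0 := hne (xs 0)
    field_simp
end

section
/- Second-moment bound for the Monte Carlo path estimator (Eq. (19)–(21) in the proof of Lemma 2.2): Let N ≥ 1, L ≥ 1. Let Φ : Fin N → ℂ satisfy ∑_x |Φ(x)|² = 1 and Φ(x) ≠ 0 for all x. For each l ∈ {1,…,L} let G_l be a real symmetric N×N matrix with nonnegative entries, let φ_l : Fin N → ℝ be entrywise strictly positive, and let λ_l satisfy 0 < λ_l ≤ 1 and G_l φ_l = λ_l φ_l. For a path x⃗ = (x_0,…,x_L) ∈ (Fin N)^{L+1} define Π(x⃗) = |Φ(x_0)|² ∏_{l=1}^L [G_l(x_{l−1},x_l) φ_l(x_l) / (λ_l φ_l(x_{l−1}))] and R(x⃗) = (Φ(x_L)/Φ(x_0)) ∏_{l=1}^L [λ_l φ_l(x_{l−1})/φ_l(x_l)]. Then ∑_{x⃗} Π(x⃗) |R(x⃗)|² ≤ 1. -/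
open scoped BigOperators
open Matrix

lemma path_sum_le (N : ℕ) (f : Fin N → ℝ) (hf : ∀ x, 0 ≤ f x) (L : ℕ)
    (K : Fin L → Fin N → Fin N → ℝ) (hK : ∀ l x y, 0 ≤ K l x y)
    (hs : ∀ l y, ∑ x, K l x y ≤ 1) :
    ∑ xs : Fin (L + 1) → Fin N,
      f (xs (Fin.last L)) * ∏ l : Fin L, K l (xs l.castSucc) (xs l.succ) ≤ ∑ x, f x := by
  induction L with
  | zero =>
    rw [← (Equiv.funUnique (Fin 1) (Fin N)).sum_comp f]
    simp [Equiv.funUnique]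
  | succ L ih =>
    refine le_trans ?_ (ih (fun l => K l.succ) (fun l => hK _) (fun l => hs _))
    rw [← (Fin.consEquiv (fun _ : Fin (L + 2) => Fin N)).sum_comp, Fintype.sum_prod_type,
      Finset.sum_comm]
    refine Finset.sum_le_sum fun ys _ => ?_
    have h : ∀ x : Fin N,
        f ((Fin.consEquiv (fun _ : Fin (L + 2) => Fin N)) (x, ys) (Fin.last (L + 1))) *
          ∏ l : Fin (L + 1), K l ((Fin.consEquiv (fun _ : Fin (L + 2) => Fin N)) (x, ys) l.castSucc)
            ((Fin.consEquiv (fun _ : Fin (L + 2) => Fin N)) (x, ys) l.succ) =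
        K 0 x (ys 0) * (f (ys (Fin.last L)) *
          ∏ l : Fin L, K l.succ (ys l.castSucc) (ys l.succ)) := by
      intro x
      rw [Fin.prod_univ_succ]
      simp only [Fin.consEquiv_apply, Fin.castSucc_zero, Fin.cons_zero, Fin.cons_succ,
        ← Fin.succ_last, Fin.castSucc_succ]
      ring
    rw [Finset.sum_congr rfl fun x _ => h x, ← Finset.sum_mul]
    exact mul_le_of_le_one_left
      (mul_nonneg (hf _) (Finset.prod_nonneg fun l _ => hK _ _ _)) (hs _ _)

/-- Second-moment bound for the Monte Carlo path estimator
(Eqs. (19)–(21) in the proof of Lemma 2.2). -/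
theorem mc_path_estimator_second_moment_bound
    (N L : ℕ) (hN : 1 ≤ N) (hL : 1 ≤ L)
    (Φ : Fin N → ℂ)
    (hnorm : ∑ x, ‖Φ x‖ ^ 2 = 1)
    (hne : ∀ x, Φ x ≠ 0)
    (G : Fin L → Matrix (Fin N) (Fin N) ℝ)
    (hsymm : ∀ l, (G l).IsSymm)
    (hnonneg : ∀ l x y, 0 ≤ G l x y)
    (φ : Fin L → Fin N → ℝ)
    (hφ : ∀ l x, 0 < φ l x)
    (lam : Fin L → ℝ)
    (hlam : ∀ l, 0 < lam l)
    (hlam1 : ∀ l, lam l ≤ 1)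
    (heig : ∀ l, G l *ᵥ φ l = lam l • φ l) :
    ∑ xs : Fin (L + 1) → Fin N,
        (‖Φ (xs 0)‖ ^ 2 *
            ∏ l : Fin L,
              G l (xs l.castSucc) (xs l.succ) * φ l (xs l.succ) /
                (lam l * φ l (xs l.castSucc))) *
          ‖Φ (xs (Fin.last L)) / Φ (xs 0) *
            (↑(∏ l : Fin L, lam l * φ l (xs l.castSucc) / φ l (xs l.succ)) : ℂ)‖ ^ 2
      ≤ 1 := by
  rw [← hnorm]
  refine le_trans (le_of_eq ?_) (path_sum_le N (fun x => ‖Φ x‖ ^ 2) (fun x => by positivity) L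
    (fun l x y => G l x y * (lam l * φ l x / φ l y)) ?_ ?_)
  · refine Finset.sum_congr rfl fun xs _ => ?_
    have h0 : ‖Φ (xs 0)‖ ≠ 0 := norm_ne_zero_iff.mpr (hne _)
    rw [norm_mul, norm_div, Complex.norm_real, mul_pow, Real.norm_eq_abs, sq_abs, div_pow,
      ← Finset.prod_pow]
    have hp : (∏ l : Fin L, G l (xs l.castSucc) (xs l.succ) *
          (lam l * φ l (xs l.castSucc) / φ l (xs l.succ))) =
        (∏ l : Fin L, G l (xs l.castSucc) (xs l.succ) * φ l (xs l.succ) /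
                (lam l * φ l (xs l.castSucc))) *
        ∏ l : Fin L, (lam l * φ l (xs l.castSucc) / φ l (xs l.succ)) ^ 2 := by
      rw [← Finset.prod_mul_distrib]
      refine Finset.prod_congr rfl fun l _ => ?_
      have h1 := (hφ l (xs l.castSucc)).ne'
      have h2 := (hφ l (xs l.succ)).ne'
      have h3 := (hlam l).ne'
      field_simp
    rw [hp]
    field_simp
  · intro l x y
    have h1 := hφ l x
    have h2 := hφ l y
    have h3 := hlam l
    have h4 := hnonneg l x y
    positivity
  · intro l y
    have h2 := hφ l y
    have he := congrFun (heig l) y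
    simp only [Matrix.mulVec, dotProduct, Pi.smul_apply, smul_eq_mul] at he
    have : ∑ x, G l x y * (lam l * φ l x / φ l y) = lam l / φ l y * ∑ x, G l y x * φ l x := by
      rw [Finset.mul_sum]
      refine Finset.sum_congr rfl fun x _ => ?_
      rw [(hsymm l).apply y x]
      ring
    rw [this, he]
    have h5 : lam l / φ l y * (lam l * φ l y) = lam l * lam l := by
      field_simp
    rw [h5]
    nlinarith [hlam l, hlam1 l]
end

section
/- Rank of the noiseless Hankel matrix: Let K, L, S be natural numbers with L ≤ K, S ≤ L+1 and S ≤ K−L+1. Let z : Fin S → ℂ be injective (pairwise distinct poles) and c : Fin S → ℂ with c_j ≠ 0 for all j, and define the signal g(k) = ∑_j c_j · (z_j)^k. Then the Hankel matrix H(g), i.e. the (L+1)×(K−L+1) matrix with entries H(g)_{a,b} = g(a+b), has rank exactly S. -/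
open scoped BigOperators

/-- Rank of the noiseless Hankel matrix: with `S` pairwise distinct poles and
nonzero coefficients, the Hankel matrix of the signal has rank exactly `S`. -/
theorem hankel_rank_eq_numberOfPoles
    (K L S : ℕ) (hLK : L ≤ K) (hSL : S ≤ L + 1) (hSKL : S ≤ K - L + 1)
    (z : Fin S → ℂ) (hz : Function.Injective z)
    (c : Fin S → ℂ) (hc : ∀ j, c j ≠ 0) :
    (Matrix.of fun (a : Fin (L + 1)) (b : Fin (K - L + 1)) =>
        ∑ j, c j * z j ^ ((a : ℕ) + (b : ℕ))).rank = S := by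
  apply le_antisymm
  · have h : (Matrix.of fun (a : Fin (L + 1)) (b : Fin (K - L + 1)) =>
        ∑ j, c j * z j ^ ((a : ℕ) + (b : ℕ))) =
        (Matrix.of fun (a : Fin (L + 1)) (j : Fin S) => c j * z j ^ (a : ℕ)) *
        (Matrix.of fun (j : Fin S) (b : Fin (K - L + 1)) => z j ^ (b : ℕ)) := by
      ext a b
      simp [Matrix.mul_apply, pow_add, mul_assoc]
    rw [h]
    refine (Matrix.rank_mul_le_left _ _).trans ((Matrix.rank_le_card_width _).trans ?_)
    simp
  · have h : (Matrix.of fun (a : Fin (L + 1)) (b : Fin (K - L + 1)) =>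
        ∑ j, c j * z j ^ ((a : ℕ) + (b : ℕ))).submatrix (Fin.castLE hSL) (Fin.castLE hSKL) =
        (Matrix.vandermonde z).transpose * Matrix.diagonal c * Matrix.vandermonde z := by
      ext a b
      simp only [Matrix.submatrix_apply, Matrix.of_apply, Matrix.mul_apply (N := Matrix.vandermonde z),
        Matrix.mul_diagonal, Matrix.transpose_apply, Matrix.vandermonde_apply, Fin.val_castLE]
      exact Finset.sum_congr rfl fun j _ => by ring
    have hV : (Matrix.vandermonde z).det ≠ 0 := Matrix.det_vandermonde_ne_zero_iff.2 hz
    have hd : ((Matrix.vandermonde z).transpose * Matrix.diagonal c *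
        Matrix.vandermonde z).det ≠ 0 := by
      rw [Matrix.det_mul, Matrix.det_mul, Matrix.det_transpose, Matrix.det_diagonal]
      exact mul_ne_zero (mul_ne_zero hV (Finset.prod_ne_zero_iff.2 fun j _ => hc j)) hV
    have hr := Matrix.rank_of_isUnit _ ((Matrix.isUnit_iff_isUnit_det _).2 hd.isUnit)
    rw [← h, Fintype.card_fin] at hr
    calc S = _ := hr.symm
      _ ≤ _ := Matrix.rank_submatrix_le _ _ _
end

section
/- Exact recovery from a noiseless signal with K+1 ≥ 2S samples: Let S ≥ 1, let z, z' : Fin S → ℂ both be injective (pairwise distinct poles), and let c, c' : Fin S → ℂ satisfy c_j ≠ 0 and c'_j ≠ 0 for all j. If ∑_j c_j · (z_j)^k = ∑_j c'_j · (z'_j)^k for every k ∈ {0, 1, …, 2S−1}, then there exists a permutation σ of Fin S such that z'_j = z_{σ(j)} and c'_j = c_{σ(j)} for all j. In other words, the poles z_j and coefficients c_j of an S-term noiseless signal are uniquely determined (up to relabeling) by its values at 2S consecutive times k = 0,…,2S−1. -/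
open scoped BigOperators

/-- Exact recovery from a noiseless signal with `2S` samples: the poles and
coefficients of an `S`-term signal are determined up to relabeling by its
values at `k = 0, …, 2S−1`. -/
theorem noiseless_signal_exact_recovery
    (S : ℕ) (hS : 1 ≤ S)
    (z z' : Fin S → ℂ) (hz : Function.Injective z) (hz' : Function.Injective z')
    (c c' : Fin S → ℂ) (hc : ∀ j, c j ≠ 0) (hc' : ∀ j, c' j ≠ 0)
    (h : ∀ k < 2 * S, ∑ j, c j * z j ^ k = ∑ j, c' j * z' j ^ k) :
    ∃ σ : Equiv.Perm (Fin S), ∀ j, z' j = z (σ j) ∧ c' j = c (σ j) := by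
  classical
  have hp : ∀ p : Polynomial ℂ, p.natDegree < 2 * S →
      ∑ j, c j * p.eval (z j) = ∑ j, c' j * p.eval (z' j) := by
    intro p hd
    simp only [Polynomial.eval_eq_sum_range' hd, Finset.mul_sum]
    rw [Finset.sum_comm, Finset.sum_comm (s := Finset.univ (α := Fin S)) (t := Finset.range (2 * S))]
    refine Finset.sum_congr rfl fun k hk => ?_
    have := congrArg (fun x => p.coeff k * x) (h k (Finset.mem_range.1 hk))
    simp only [Finset.mul_sum] at this
    calc _ = ∑ j, p.coeff k * (c j * z j ^ k) := Finset.sum_congr rfl fun _ _ => by ring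
      _ = _ := this
      _ = _ := Finset.sum_congr rfl fun _ _ => by ring
  have key : ∀ i, ∑ j, (if z j = z' i then c j else 0) = c' i := by
    intro i
    set U := Finset.univ.image z ∪ Finset.univ.image z' with hU
    have hw : z' i ∈ U := by simp [hU]
    have hcard : U.card ≤ 2 * S := by
      refine (Finset.card_union_le _ _).trans ?_
      have h1 := Finset.card_image_le (s := (Finset.univ : Finset (Fin S))) (f := z)
      have h2 := Finset.card_image_le (s := (Finset.univ : Finset (Fin S))) (f := z')
      simp only [Finset.card_univ, Fintype.card_fin] at h1 h2
      omega
    set p : Polynomial ℂ := ∏ t ∈ U.erase (z' i), (Polynomial.X - Polynomial.C t) with hpdef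
    have hdeg : p.natDegree < 2 * S := by
      rw [hpdef, Polynomial.natDegree_finsetProd_X_sub_C_eq_card, Finset.card_erase_of_mem hw]
      have := Finset.card_pos.2 ⟨_, hw⟩
      omega
    have hne : p.eval (z' i) ≠ 0 := by
      rw [hpdef, Polynomial.eval_prod, Finset.prod_ne_zero_iff]
      intro t ht
      simp only [Polynomial.eval_sub, Polynomial.eval_X, Polynomial.eval_C]
      exact sub_ne_zero.2 (Finset.ne_of_mem_erase ht).symm
    have hzero : ∀ t ∈ U, t ≠ z' i → p.eval t = 0 := by
      intro t ht hti
      rw [hpdef, Polynomial.eval_prod]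
      exact Finset.prod_eq_zero (Finset.mem_erase.2 ⟨hti, ht⟩) (by simp)
    have e := hp p hdeg
    rw [Finset.sum_eq_single (f := fun j => c' j * p.eval (z' j)) i (fun j _ hj => by
      rw [hzero (z' j) (by simp [hU]) (fun hh => hj (hz' hh)), mul_zero]) (by simp)] at e
    apply mul_right_cancel₀ hne
    rw [← e, Finset.sum_mul]
    refine Finset.sum_congr rfl fun j _ => ?_
    split_ifs with hj
    · rw [hj]
    · rw [hzero (z j) (by simp [hU]) hj, mul_zero, zero_mul]
  have hex : ∀ i, ∃ j, z j = z' i := by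
    intro i
    by_contra! hcon
    apply hc' i
    rw [← key i]
    exact Finset.sum_eq_zero fun j _ => if_neg (hcon j)
  choose f hf using hex
  have hinj : Function.Injective f := fun a b hab => hz' (by rw [← hf a, ← hf b, hab])
  refine ⟨Equiv.ofBijective f (Finite.injective_iff_bijective.1 hinj), fun j => ⟨(hf j).symm, ?_⟩⟩
  rw [← key j, Finset.sum_eq_single (f j) (fun b _ hb => if_neg fun hh =>
    hb (hz (hh.trans (hf j).symm))) (by simp), if_pos (hf j)]
  rfl
end

section
/- Smallest singular value of the truncated isometry factor (Lemma D.5): Let V be an (L+1)×S complex matrix, let V' be the L×S matrix obtained from V by removing its last row, and let A be an invertible S×S complex matrix such that U := V·A has orthonormal columns, i.e. Uᴴ U = I_S. Set U₀ := V'·A (the matrix obtained from U by removing its last row). Assume there exists s > 0 with ‖V' x‖ ≥ s ‖x‖ for every x ∈ ℂ^S (so V' has full column rank with smallest singular value at least s). Then for every x ∈ ℂ^S, ‖U₀ x‖ ≥ (s / ‖V‖) ‖x‖, where ‖V‖ is the spectral (ℓ²→ℓ²) operator norm of V. -/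
open Matrix
open scoped BigOperators

/-- The spectral (ℓ²→ℓ²) operator norm of a complex matrix. -/
noncomputable def specNorm {m n : ℕ} (A : Matrix (Fin m) (Fin n) ℂ) : ℝ :=
  ‖LinearMap.toContinuousLinearMap (Matrix.toEuclideanLin A)‖

/-- The Euclidean (ℓ²) norm of a complex vector. -/
noncomputable def evnorm {n : ℕ} (v : Fin n → ℂ) : ℝ :=
  Real.sqrt (∑ i, ‖v i‖ ^ 2)

/-- Smallest singular value of the truncated isometry factor (Lemma D.5):
if `U = V·A` has orthonormal columns and `V'` (V with its last row removed) has
smallest singular value at least `s`, then `U₀ = V'·A` has smallest singular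
value at least `s / ‖V‖`. -/
theorem truncated_isometry_smallest_singular_value
    (L S : ℕ)
    (V : Matrix (Fin (L + 1)) (Fin S) ℂ)
    (V' : Matrix (Fin L) (Fin S) ℂ)
    (hV' : ∀ (a : Fin L) (j : Fin S), V' a j = V a.castSucc j)
    (A : Matrix (Fin S) (Fin S) ℂ) (hA : IsUnit A)
    (hU : (V * A)ᴴ * (V * A) = 1)
    (s : ℝ) (hs : 0 < s)
    (hσ : ∀ x : Fin S → ℂ, s * evnorm x ≤ evnorm (V' *ᵥ x)) :
    ∀ x : Fin S → ℂ, s / specNorm V * evnorm x ≤ evnorm ((V' * A) *ᵥ x) := by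
  intro x
  have hev : ∀ {n : ℕ} (v : Fin n → ℂ), evnorm v = ‖WithLp.toLp 2 v‖ := by
    intro n v
    simp [evnorm, EuclideanSpace.norm_eq]
  have hdot : ∀ {n : ℕ} (v : Fin n → ℂ), evnorm v = Real.sqrt (star v ⬝ᵥ v).re := by
    intro n v
    unfold evnorm
    congr 1
    simp only [dotProduct, Complex.re_sum]
    refine Finset.sum_congr rfl fun i _ => ?_
    rw [← Complex.normSq_eq_norm_sq, Complex.normSq_apply]
    simp [Complex.mul_re]
  have h1 : evnorm x = evnorm ((V * A) *ᵥ x) := by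
    rw [hdot, hdot, star_mulVec, ← dotProduct_mulVec, mulVec_mulVec, hU, one_mulVec]
  have h2 : evnorm ((V * A) *ᵥ x) ≤ specNorm V * evnorm (A *ᵥ x) := by
    rw [← mulVec_mulVec, hev, hev]
    exact (LinearMap.toContinuousLinearMap (Matrix.toEuclideanLin V)).le_opNorm
      (WithLp.toLp 2 (A *ᵥ x))
  have h3 := hσ (A *ᵥ x)
  rw [mulVec_mulVec] at h3
  have hn : 0 ≤ specNorm V := norm_nonneg _
  rcases hn.eq_or_lt with h0 | hpos
  · rw [← h0, div_zero, zero_mul]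
    exact Real.sqrt_nonneg _
  · refine le_trans ?_ h3
    rw [div_mul_eq_mul_div, div_le_iff₀ hpos]
    rw [← h1] at h2
    nlinarith [mul_le_mul_of_nonneg_left h2 hs.le]
end

section
/- Frobenius-norm comparison of singular subspaces via canonical angles (the computational core of Lemma D.2): Let L+1 ≥ S and let U_S and Ũ_S be (L+1)×S complex matrices with orthonormal columns (U_Sᴴ U_S = I_S and Ũ_Sᴴ Ũ_S = I_S). Let U_S^⊥ be an (L+1)×(L+1−S) complex matrix satisfying (U_S^⊥)ᴴ U_S^⊥ = I_{L+1−S}, (U_S^⊥)ᴴ U_S = 0, and U_S U_Sᴴ + U_S^⊥ (U_S^⊥)ᴴ = I_{L+1}. Let O₁, O₂ be S×S unitary matrices and D an S×S real diagonal matrix with diagonal entries in [0,1] such that O₁ U_Sᴴ Ũ_S O₂ = D. Then ‖U_S (O₂ O₁)ᴴ − Ũ_S‖_F ≤ √2 · ‖(U_S^⊥)ᴴ Ũ_S‖_F. -/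
open Matrix
open scoped BigOperators

/-- The Frobenius norm of a complex matrix. -/
noncomputable def frobNorm {m n : ℕ} (A : Matrix (Fin m) (Fin n) ℂ) : ℝ :=
  Real.sqrt (∑ a, ∑ b, ‖A a b‖ ^ 2)

theorem frob_sq_trace {m n : ℕ} (A : Matrix (Fin m) (Fin n) ℂ) :
    (∑ a, ∑ b, ‖A a b‖ ^ 2) = (Matrix.trace (Aᴴ * A)).re := by
  rw [Finset.sum_comm]
  simp only [Matrix.trace, Matrix.diag, Matrix.mul_apply, Matrix.conjTranspose_apply,
    Complex.re_sum]
  refine Finset.sum_congr rfl fun b _ => Finset.sum_congr rfl fun a _ => ?_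
  rw [← Complex.normSq_eq_norm_sq, Complex.normSq_apply]
  simp [Complex.mul_re]

/-- Frobenius-norm comparison of singular subspaces via canonical angles
(the computational core of Lemma D.2). -/
theorem singular_subspace_frobenius_comparison
    (L S : ℕ) (hS : S ≤ L + 1)
    (U Ut : Matrix (Fin (L + 1)) (Fin S) ℂ)
    (hU : Uᴴ * U = 1) (hUt : Utᴴ * Ut = 1)
    (Uperp : Matrix (Fin (L + 1)) (Fin (L + 1 - S)) ℂ)
    (hUperp1 : Uperpᴴ * Uperp = 1)
    (hUperp2 : Uperpᴴ * U = 0)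
    (hUperp3 : U * Uᴴ + Uperp * Uperpᴴ = 1)
    (O₁ O₂ : Matrix (Fin S) (Fin S) ℂ)
    (hO₁ : O₁ ∈ Matrix.unitaryGroup (Fin S) ℂ)
    (hO₂ : O₂ ∈ Matrix.unitaryGroup (Fin S) ℂ)
    (d : Fin S → ℝ) (hd0 : ∀ i, 0 ≤ d i) (hd1 : ∀ i, d i ≤ 1)
    (hD : O₁ * Uᴴ * Ut * O₂ = Matrix.diagonal fun i => (d i : ℂ)) :
    frobNorm (U * (O₂ * O₁)ᴴ - Ut) ≤ Real.sqrt 2 * frobNorm (Uperpᴴ * Ut) := by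
  have h11 : O₁ᴴ * O₁ = 1 := Matrix.mem_unitaryGroup_iff'.1 hO₁
  have h12 : O₁ * O₁ᴴ = 1 := Matrix.mem_unitaryGroup_iff.1 hO₁
  have h22 : O₂ * O₂ᴴ = 1 := Matrix.mem_unitaryGroup_iff.1 hO₂
  have e1 : (U * (O₂ * O₁)ᴴ)ᴴ * (U * (O₂ * O₁)ᴴ) = 1 := by
    calc _ = O₂ * (O₁ * (Uᴴ * U) * O₁ᴴ) * O₂ᴴ := by
          simp only [conjTranspose_mul, conjTranspose_conjTranspose, Matrix.mul_assoc]
      _ = 1 := by rw [hU, Matrix.mul_one, h12, Matrix.mul_one, h22]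
  have e2 : Matrix.trace ((U * (O₂ * O₁)ᴴ)ᴴ * Ut) = ((∑ i, d i : ℝ) : ℂ) := by
    calc _ = Matrix.trace (O₂ * (O₁ * Uᴴ * Ut)) := by
          simp only [conjTranspose_mul, conjTranspose_conjTranspose, Matrix.mul_assoc]
      _ = _ := by rw [Matrix.trace_mul_comm, hD, Matrix.trace_diagonal]; push_cast; rfl
  have e3 : Matrix.trace (Utᴴ * (U * (O₂ * O₁)ᴴ)) = ((∑ i, d i : ℝ) : ℂ) := by
    have : Utᴴ * (U * (O₂ * O₁)ᴴ) = ((U * (O₂ * O₁)ᴴ)ᴴ * Ut)ᴴ := by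
      simp only [conjTranspose_mul, conjTranspose_conjTranspose]
    rw [this, Matrix.trace_conjTranspose, e2]
    exact Complex.conj_ofReal _
  have e4 : Matrix.trace ((Uᴴ * Ut)ᴴ * (Uᴴ * Ut)) = ((∑ i, d i ^ 2 : ℝ) : ℂ) := by
    calc _ = Matrix.trace ((Uᴴ * Ut)ᴴ * (O₁ᴴ * O₁) * (Uᴴ * Ut) * (O₂ * O₂ᴴ)) := by
          rw [h11, h22, Matrix.mul_one, Matrix.mul_one]
      _ = Matrix.trace (((Uᴴ * Ut)ᴴ * (O₁ᴴ * O₁) * (Uᴴ * Ut) * O₂) * O₂ᴴ) := by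
          simp only [Matrix.mul_assoc]
      _ = Matrix.trace ((O₁ * Uᴴ * Ut * O₂)ᴴ * (O₁ * Uᴴ * Ut * O₂)) := by
          rw [Matrix.trace_mul_comm]
          simp only [conjTranspose_mul, conjTranspose_conjTranspose, Matrix.mul_assoc]
      _ = _ := by
          rw [hD, diagonal_conjTranspose, diagonal_mul_diagonal, Matrix.trace_diagonal]
          push_cast
          refine Finset.sum_congr rfl fun i _ => ?_
          simp [pow_two]
  have e5 : (Uperpᴴ * Ut)ᴴ * (Uperpᴴ * Ut) = 1 - (Uᴴ * Ut)ᴴ * (Uᴴ * Ut) := by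
    have h : Uperp * Uperpᴴ = 1 - U * Uᴴ := eq_sub_of_add_eq' hUperp3
    calc _ = Utᴴ * (Uperp * Uperpᴴ) * Ut := by
          simp only [conjTranspose_mul, conjTranspose_conjTranspose, Matrix.mul_assoc]
      _ = _ := by
          rw [h, Matrix.mul_sub, Matrix.sub_mul, Matrix.mul_one, hUt]
          simp only [conjTranspose_mul, conjTranspose_conjTranspose, Matrix.mul_assoc]
  unfold frobNorm
  rw [← Real.sqrt_mul (by norm_num)]
  apply Real.sqrt_le_sqrt
  rw [frob_sq_trace, frob_sq_trace, e5, Matrix.trace_sub, e4, conjTranspose_sub, Matrix.sub_mul,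
    Matrix.mul_sub, Matrix.mul_sub, e1, hUt, Matrix.trace_sub, Matrix.trace_sub, Matrix.trace_sub,
    e2, e3]
  simp only [Complex.sub_re, Complex.ofReal_re]
  have hle : ∑ i, d i ^ 2 ≤ ∑ i, d i :=
    Finset.sum_le_sum fun i _ => by nlinarith [hd0 i, hd1 i]
  linarith
end

section
/- Lower bound on the smallest singular value of the rectangular Vandermonde matrix of a gapped decaying signal (combining Lemma D.7, Theorem D.6 and the gap bound in the proof of Theorem 7): Let S ≥ 1, T ≥ 1 be integers and 0 < Δ ≤ 1. Let E : Fin S → ℝ satisfy 0 ≤ E_i < 2π for all i and |E_i − E_j| ≥ 2πΔ for all i ≠ j. Set z_i = exp(−E_i) and let V be the (S·T)×S rectangular Vandermonde matrix with entries V_{a,i} = (z_i)^a for a ∈ {0,…,S·T−1}. Then for every x : Fin S → ℝ, ‖V x‖ ≥ (1/(2√S)) · (π Δ exp(−2π))^{S−1} · ‖x‖, where the norms are Euclidean (ℓ²) norms. -/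
open Matrix
open scoped BigOperators

/-- Divided-difference style bound: applying the shift filters for the nodes in `s`. -/
lemma filter_bound {S : ℕ} (x z : Fin S → ℝ) (hz0 : ∀ i, 0 ≤ z i) (hz1 : ∀ i, z i ≤ 1)
    (M : ℝ) (N : ℕ) (hM : ∀ k, k < N → |∑ i, x i * z i ^ k| ≤ M) (s : Finset (Fin S)) :
    ∀ m, m + s.card < N →
      |∑ i, x i * z i ^ m * ∏ j ∈ s, (z i - z j)| ≤ 2 ^ s.card * M := by
  classical
  induction s using Finset.induction_on with
  | empty =>
    intro m hm
    simpa using hM m (by simpa using hm)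
  | insert j s hj ih =>
    intro m hm
    rw [Finset.card_insert_of_notMem hj] at hm ⊢
    have h1 := ih (m + 1) (by omega)
    have h2 := ih m (by omega)
    have e : ∑ i, x i * z i ^ m * ∏ l ∈ insert j s, (z i - z l)
        = (∑ i, x i * z i ^ (m + 1) * ∏ l ∈ s, (z i - z l))
          - z j * ∑ i, x i * z i ^ m * ∏ l ∈ s, (z i - z l) := by
      rw [Finset.mul_sum, ← Finset.sum_sub_distrib]
      refine Finset.sum_congr rfl fun i _ => ?_
      rw [Finset.prod_insert hj]
      ring
    rw [e]
    refine (abs_sub _ _).trans ?_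
    rw [abs_mul, abs_of_nonneg (hz0 j)]
    have h3 := mul_le_mul (hz1 j) h2 (abs_nonneg _) zero_le_one
    rw [pow_succ]
    linarith

lemma exp_gap_aux (a b g : ℝ) (hb : b < 2 * Real.pi) (hg : 0 ≤ g)
    (h : g ≤ b - a) : g * Real.exp (-(2 * Real.pi)) ≤ Real.exp (-a) - Real.exp (-b) := by
  have e : Real.exp (-a) = Real.exp (-b) * Real.exp (b - a) := by
    rw [← Real.exp_add]; congr 1; ring
  have h1 := Real.add_one_le_exp (b - a)
  have h2 : Real.exp (-(2 * Real.pi)) ≤ Real.exp (-b) := Real.exp_le_exp.2 (by linarith)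
  have h3 : g * Real.exp (-(2 * Real.pi)) ≤ (Real.exp (b - a) - 1) * Real.exp (-b) :=
    mul_le_mul (by linarith) h2 (Real.exp_pos _).le (by linarith)
  rw [e]; linarith

lemma exp_gap (a b g : ℝ) (ha : a < 2 * Real.pi) (hb : b < 2 * Real.pi) (hg : 0 ≤ g)
    (h : g ≤ |a - b|) : g * Real.exp (-(2 * Real.pi)) ≤ |Real.exp (-a) - Real.exp (-b)| := by
  rcases le_abs.1 h with h | h
  · have := exp_gap_aux b a g ha hg h
    rw [abs_sub_comm]
    exact this.trans (le_abs_self _)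
  · exact (exp_gap_aux a b g hb hg (by linarith)).trans (le_abs_self _)

/-- Lower bound on the smallest singular value of the rectangular Vandermonde
matrix of a gapped decaying signal (combining Lemma D.7, Theorem D.6 and the
gap bound in the proof of Theorem 7). -/
theorem gapped_vandermonde_smallest_singular_value_lower_bound
    (S T : ℕ) (hS : 1 ≤ S) (hT : 1 ≤ T)
    (Δ : ℝ) (hΔ0 : 0 < Δ) (hΔ1 : Δ ≤ 1)
    (E : Fin S → ℝ) (hE0 : ∀ i, 0 ≤ E i) (hE2π : ∀ i, E i < 2 * Real.pi)
    (hgap : ∀ i j, i ≠ j → 2 * Real.pi * Δ ≤ |E i - E j|)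
    (V : Matrix (Fin (S * T)) (Fin S) ℝ)
    (hV : ∀ (a : Fin (S * T)) (i : Fin S), V a i = Real.exp (-E i) ^ (a : ℕ)) :
    ∀ x : Fin S → ℝ,
      1 / (2 * Real.sqrt S) * (Real.pi * Δ * Real.exp (-(2 * Real.pi))) ^ (S - 1) *
          Real.sqrt (∑ i, x i ^ 2)
        ≤ Real.sqrt (∑ a, (V *ᵥ x) a ^ 2) := by
  classical
  intro x
  set M := Real.sqrt (∑ a, (V *ᵥ x) a ^ 2) with hMdef
  set c := Real.pi * Δ * Real.exp (-(2 * Real.pi)) with hc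
  have hc0 : 0 < c := by have := Real.pi_pos; positivity
  have hM0 : 0 ≤ M := Real.sqrt_nonneg _
  have hST : S ≤ S * T := Nat.le_mul_of_pos_right S hT
  have hM : ∀ k, k < S → |∑ i, x i * Real.exp (-E i) ^ k| ≤ M := by
    intro k hk
    have e : ∑ i, x i * Real.exp (-E i) ^ k = (V *ᵥ x) ⟨k, by omega⟩ := by
      simp only [Matrix.mulVec, dotProduct, hV]
      exact Finset.sum_congr rfl fun i _ => mul_comm _ _
    rw [e]
    apply Real.abs_le_sqrt
    exact Finset.single_le_sum (f := fun a => (V *ᵥ x) a ^ 2)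
      (fun a _ => sq_nonneg _) (Finset.mem_univ _)
  have key : ∀ i, |x i| * c ^ (S - 1) ≤ M := by
    intro i
    have hcard : (Finset.univ.erase i).card = S - 1 := by simp
    have h := filter_bound x (fun i => Real.exp (-E i)) (fun i => (Real.exp_pos _).le)
      (fun i => Real.exp_le_one_iff.2 (by linarith [hE0 i])) M S hM (Finset.univ.erase i) 0
      (by rw [hcard]; omega)
    rw [hcard, Finset.sum_eq_single i] at h
    · rw [pow_zero, mul_one, abs_mul, Finset.abs_prod] at h
      have hp : (2 * c) ^ (S - 1) ≤
          ∏ j ∈ Finset.univ.erase i, |Real.exp (-E i) - Real.exp (-E j)| := by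
        rw [← hcard, ← Finset.prod_const]
        refine Finset.prod_le_prod (fun _ _ => by positivity) fun j hj => ?_
        have := exp_gap (E i) (E j) (2 * Real.pi * Δ) (hE2π i) (hE2π j)
          (by have := Real.pi_pos; positivity) (hgap i j (Finset.ne_of_mem_erase hj).symm)
        rw [hc]; linarith
      have h4 := (mul_le_mul_of_nonneg_left hp (abs_nonneg (x i))).trans h
      rw [mul_pow] at h4
      have h5 : (0 : ℝ) < 2 ^ (S - 1) := by positivity
      refine le_of_mul_le_mul_left ?_ h5
      linarith
    · intro b _ hb
      rw [Finset.prod_eq_zero (i := b) (by simp [hb]) (sub_self _), mul_zero]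
    · simp
  have hS0 : (0 : ℝ) < Real.sqrt S := Real.sqrt_pos.2 (by exact_mod_cast hS)
  have hsum : c ^ (S - 1) * Real.sqrt (∑ i, x i ^ 2) ≤ Real.sqrt S * M := by
    have hcp : 0 ≤ c ^ (S - 1) := by positivity
    refine (pow_le_pow_iff_left₀ (by positivity) (by positivity) two_ne_zero).1 ?_
    rw [mul_pow (c ^ (S - 1)), mul_pow (Real.sqrt S), Real.sq_sqrt (Finset.sum_nonneg fun _ _ => sq_nonneg _),
      Real.sq_sqrt (Nat.cast_nonneg _), Finset.mul_sum]
    calc _ ≤ ∑ _i : Fin S, M ^ 2 := by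
          refine Finset.sum_le_sum fun i _ => ?_
          have := pow_le_pow_left₀ (by positivity) (key i) 2
          rw [mul_pow, sq_abs] at this
          linarith
      _ = _ := by simp
  have : 1 / (2 * Real.sqrt S) * c ^ (S - 1) * Real.sqrt (∑ i, x i ^ 2)
      = (c ^ (S - 1) * Real.sqrt (∑ i, x i ^ 2)) / (2 * Real.sqrt S) := by ring
  rw [this, div_le_iff₀ (by positivity)]
  nlinarith [mul_nonneg hS0.le hM0]
end
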